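/- Near-optimality of the dynamic opaque selling policy in the large-inventory regime (Theorem 4(i)): Suppose that for each S ≥ 2 the parameters satisfy k₁·S ≤ K_S ≤ k₂·S, h₁/S ≤ h_S ≤ h₂/S, and 0 ≤ δ_S ≤ min{d/√S, 1}, for constants k₁, k₂, h₁, h₂, d > 0. Let R^d be the replenishment cycle length and D^d = Σ_{t=1}^{R^d} f_t·ω(t) the per-cycle discount count of the dynamic opaque policy at stock level S, and let C^d(S) = K_S/E[R^d] + (h_S/2)·(2NS + 1 − E[(R^d)²]/E[R^d]) + δ_S·E[D^d]/E[R^d] and C⋆(S) = K_S/(N(S−1)+1) + (h_S/2)·(NS + N). Then there exist a constant C and S₀ ∈ ℕ such that C^d(S) − C⋆(S) ≤ C/S for all S ≥ S₀. -/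

import Mathlib

/-!
Write `T = N(S-1)+1`, `b = C(N,2)` and let `R` be the cycle length. Since `S ≤ R ≤ T ≤ NS`,
the cost difference equals `K (1/E[R] - 1/T) + (h/2) (T - E[R²]/E[R]) + δ E[D]/E[R]`, so it is
`O(1/S)` once `E[T - R] = O(1)` and `E[D] = O(√T)`. Both bounds come from one-step drift
inequalities for the Markov chain (flag, loads); `expec_step_le` turns a drift inequality on
reachable states into an inequality between expectations.

*Cycle length* (`exists_expec_loss_le`). `T - R` is at most the number of times `t < T` at which
the maximum load is already at least `S`, which forces the exponential potential
`Φ_t = ∑ᵢ exp (η (xᵢ - t/N))` to be at least `exp (η (T-t)/N)`. While flexing, the lighter of two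
random bins receives the ball, and for `η = q/(4b)` this yields
`E[Φ_{t+1}] ≤ exp (-λ) Φ_t + 1` with `λ = η q/(10 b N)` (`expPot_drift`). Before the trigger,
`Φ_t ≤ N exp (λ (T-t))` by definition of the trigger curve. As both rates are the same `λ`,
`E[Φ_t] ≤ M exp (λ (T-t)) + B` for constants `M`, `B` (`expec_expPot_le`). Since `λ < η/N`,
Markov's inequality gives probabilities that are geometrically summable in `T - t`.

*Discounts* (`expec_flag_le`). `D` is at most the number `T - T⋆` of flagged periods. Before the
trigger, the balls are placed uniformly, so `∑ᵢ (xᵢ - t/N)²` grows by at most one per step in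
expectation; at the trigger time, `T - T⋆ ≤ Gap / κ` with `κ = q/(10 b N)`. Together these give
`E[T - T⋆] ≤ √T / κ`.
-/


attribute [local instance] Classical.propDecidable

/-- An arrival type: (is-flex-ball, preferred bin, flex set). -/
abbrev Arrival (N : ℕ) := Bool × Fin N × Finset (Fin N)

/-- Mass of a single arrival: `f ~ Bernoulli(q)`, `p` uniform on `Fin N`,
`F` uniform on the 2-element subsets of `Fin N`, mutually independent. -/
noncomputable def arrivalProb (N : ℕ) (q : ℝ) (a : Arrival N) : ℝ :=
  (if a.1 then q else 1 - q) * (1 / (N : ℝ)) *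
    (if a.2.2.card = 2 then 1 / (N.choose 2 : ℝ) else 0)

/-- Mass of a sequence of `T` i.i.d. arrivals. -/
noncomputable def seqMass (N T : ℕ) (q : ℝ) (xs : Fin T → Arrival N) : ℝ :=
  ∏ t, arrivalProb N q (xs t)

/-- Expectation of a real random variable on the canonical space of `T` arrivals. -/
noncomputable def expec (N T : ℕ) (q : ℝ) (X : (Fin T → Arrival N) → ℝ) : ℝ :=
  ∑ xs : Fin T → Arrival N, seqMass N T q xs * X xs

/-- Probability of an event on the canonical space of `T` arrivals. -/
noncomputable def prob (N T : ℕ) (q : ℝ) (A : (Fin T → Arrival N) → Prop) : ℝ :=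
  ∑ xs : Fin T → Arrival N, if A xs then seqMass N T q xs else 0

/-- The least-loaded bin in `F` (ties broken in favor of the smallest index). -/
noncomputable def argminBin {N : ℕ} [NeZero N] (x : Fin N → ℕ) (F : Finset (Fin N)) : Fin N :=
  if hF : (F.filter fun i => ∀ j ∈ F, x i ≤ x j).Nonempty
  then (F.filter fun i => ∀ j ∈ F, x i ≤ x j).min' hF
  else 0

/-- One step of the greedy (least-loaded) allocation: if the ball is a flex ball and
flexing is exerted, it goes to the least-loaded bin of its flex set (lexicographic
tie-breaking); otherwise it goes to its preferred bin. -/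
noncomputable def greedyStep {N : ℕ} [NeZero N] (flex : Bool) (a : Arrival N)
    (x : Fin N → ℕ) : Fin N → ℕ :=
  fun i => if i = (if a.1 && flex then argminBin x a.2.2 else a.2.1) then x i + 1 else x i

/-- Load process under a flexing rule `dec` (which may depend on the whole realization,
the time, and the current loads), with greedy placement of flexed flex balls. -/
noncomputable def greedyLoads {N T : ℕ} [NeZero N]
    (dec : (Fin T → Arrival N) → ℕ → (Fin N → ℕ) → Bool)
    (xs : Fin T → Arrival N) : ℕ → Fin N → ℕ
  | 0 => fun _ => 0
  | t + 1 =>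
    if h : t < T then
      greedyStep (dec xs t (greedyLoads dec xs t)) (xs ⟨t, h⟩) (greedyLoads dec xs t)
    else greedyLoads dec xs t

/-- The maximum load over all bins. -/
noncomputable def maxLoad {N : ℕ} (x : Fin N → ℕ) : ℕ := Finset.univ.sup x

/-- `Gap(t)` : maximum load minus the average load `t/N`. -/
noncomputable def gap {N : ℕ} (x : Fin N → ℕ) (t : ℕ) : ℝ :=
  (maxLoad x : ℝ) - (t : ℝ) / (N : ℝ)

/-- Number of flexed balls `M = ∑_t f_t ω(t)`. -/
noncomputable def numFlexed {N T : ℕ} [NeZero N]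
    (dec : (Fin T → Arrival N) → ℕ → (Fin N → ℕ) → Bool) (xs : Fin T → Arrival N) : ℕ :=
  ∑ t : Fin T, if (xs t).1 && dec xs (t : ℕ) (greedyLoads dec xs (t : ℕ)) then 1 else 0

/-- Flexing rule of a "static"-type policy: flex exactly from period
`T - c·√(T log T)` on (ball `t` corresponds to step index `t-1`). -/
noncomputable def lateDec (N T : ℕ) (c : ℝ) :
    (Fin T → Arrival N) → ℕ → (Fin N → ℕ) → Bool :=
  fun _ s _ =>
    if (T : ℝ) - c * Real.sqrt ((T : ℝ) * Real.log (T : ℝ)) ≤ ((s : ℝ) + 1) then true else false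

/-- Flexing rule of the dynamic policy: flex at period `t = s+1` iff the current gap
`Gap(t-1)` is at least `a_d (T - t) q / N` with `a_d = 1/(5 C(N,2))`. -/
noncomputable def dynDec (N T : ℕ) (q : ℝ) :
    (Fin T → Arrival N) → ℕ → (Fin N → ℕ) → Bool :=
  fun _ s x =>
    if (1 / (5 * (N.choose 2 : ℝ))) * ((T : ℝ) - ((s : ℝ) + 1)) * q / (N : ℝ) ≤ gap x s
    then true else false

/-- First time (within horizon `T`) at which the maximum load equals `S`. -/
noncomputable def hitTime {N : ℕ} (T S : ℕ) (x : ℕ → Fin N → ℕ) : ℕ :=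
  if h : ((Finset.range (T + 1)).filter fun t => maxLoad (x t) = S).Nonempty
  then ((Finset.range (T + 1)).filter fun t => maxLoad (x t) = S).min' h
  else T

/-- The dynamic opaque policy: the flag records whether the trigger condition
`Gap(t) ≥ c_d (T-t) q / N` (with `c_d = 1/(10 C(N,2))`) has held at some time `≤ t`;
from then on every flex ball is flexed (greedy placement). Returns (flag, loads). -/
noncomputable def dynOpaque (N T : ℕ) [NeZero N] (q : ℝ) (xs : Fin T → Arrival N) :
    ℕ → Bool × (Fin N → ℕ)
  | 0 =>
    (if (1 / (10 * (N.choose 2 : ℝ))) * (T : ℝ) * q / (N : ℝ) ≤ 0 then true else false,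
      fun _ => 0)
  | t + 1 =>
    let p := dynOpaque N T q xs t
    let x' := if h : t < T then greedyStep p.1 (xs ⟨t, h⟩) p.2 else p.2
    (p.1 ||
      (if (1 / (10 * (N.choose 2 : ℝ))) * ((T : ℝ) - ((t : ℝ) + 1)) * q / (N : ℝ) ≤
          gap x' (t + 1)
       then true else false),
     x')

/-- Number of flexed balls `D = ∑_{t=1}^{R} f_t ω(t)` during one replenishment cycle,
for a policy given by the flexing rule `dec`. -/
noncomputable def cycleFlexCount (N T : ℕ) [NeZero N]
    (dec : (Fin T → Arrival N) → ℕ → (Fin N → ℕ) → Bool) (S : ℕ)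
    (xs : Fin T → Arrival N) : ℕ :=
  ∑ t ∈ Finset.range (hitTime T S (greedyLoads dec xs)),
    if h : t < T then (if (xs ⟨t, h⟩).1 && dec xs t (greedyLoads dec xs t) then 1 else 0)
    else 0

/-- Number of flexed balls during one replenishment cycle of the dynamic opaque policy. -/
noncomputable def dynFlexCount (N T : ℕ) [NeZero N] (q : ℝ) (S : ℕ)
    (xs : Fin T → Arrival N) : ℕ :=
  ∑ t ∈ Finset.range (hitTime T S fun u => (dynOpaque N T q xs u).2),
    if h : t < T then (if (xs ⟨t, h⟩).1 && (dynOpaque N T q xs t).1 then 1 else 0) else 0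

/-- Expected cycle length `E[R^d]` of the dynamic opaque policy at stock level `S`. -/
noncomputable def dynER (N : ℕ) [NeZero N] (q : ℝ) (S : ℕ) : ℝ :=
  expec N (N * (S - 1) + 1) q fun xs =>
    (hitTime (N * (S - 1) + 1) S
      (fun t => (dynOpaque N (N * (S - 1) + 1) q xs t).2) : ℝ)

/-- Second moment `E[(R^d)²]` of the dynamic opaque cycle length at stock level `S`. -/
noncomputable def dynER2 (N : ℕ) [NeZero N] (q : ℝ) (S : ℕ) : ℝ :=
  expec N (N * (S - 1) + 1) q fun xs =>
    ((hitTime (N * (S - 1) + 1) S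
      (fun t => (dynOpaque N (N * (S - 1) + 1) q xs t).2) : ℝ)) ^ 2

/-- Expected per-cycle discount count `E[D^d]` of the dynamic opaque policy. -/
noncomputable def dynED (N : ℕ) [NeZero N] (q : ℝ) (S : ℕ) : ℝ :=
  expec N (N * (S - 1) + 1) q fun xs =>
    (dynFlexCount N (N * (S - 1) + 1) q S xs : ℝ)

/-- Long-run average cost `C^d` of the dynamic opaque policy. -/
noncomputable def dynCost (N : ℕ) [NeZero N] (q K h δ : ℝ) (S : ℕ) : ℝ :=
  K / dynER N q S +
    (h / 2) * (2 * (N : ℝ) * (S : ℝ) + 1 - dynER2 N q S / dynER N q S) +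
    δ * dynED N q S / dynER N q S

/-- The universal lower bound `C⋆ = K/(N(S-1)+1) + (h/2)(NS + N)`. -/
noncomputable def optCost (N : ℕ) (K h : ℝ) (S : ℕ) : ℝ :=
  K / ((N : ℝ) * ((S : ℝ) - 1) + 1) + (h / 2) * ((N : ℝ) * (S : ℝ) + (N : ℝ))

/-! ### Expectations over arrival sequences -/

lemma arrivalProb_nonneg {N : ℕ} {q : ℝ} (hq0 : 0 < q) (hq1 : q ≤ 1) (a : Arrival N) :
    0 ≤ arrivalProb N q a := by
  unfold arrivalProb
  have : (0 : ℝ) ≤ if a.1 then q else 1 - q := by split_ifs <;> linarith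
  have h2 : (0 : ℝ) ≤ if a.2.2.card = 2 then 1 / (N.choose 2 : ℝ) else 0 := by
    split_ifs <;> positivity
  positivity

/-- Averaging over one arrival, with the three independent coordinates separated. -/
lemma sum_arrivalProb {N : ℕ} (q : ℝ) (g : Arrival N → ℝ) :
    ∑ a, arrivalProb N q a * g a =
      ∑ p : Fin N, ∑ F ∈ Finset.powersetCard 2 (Finset.univ : Finset (Fin N)),
        (1 / (N : ℝ)) * (1 / (N.choose 2 : ℝ)) *
          (q * g (true, p, F) + (1 - q) * g (false, p, F)) := by
  rw [Fintype.sum_prod_type, Fintype.sum_bool, Fintype.sum_prod_type, Fintype.sum_prod_type,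
    ← Finset.sum_add_distrib]
  refine Finset.sum_congr rfl fun p _ => ?_
  rw [← Finset.sum_add_distrib, Finset.powersetCard_eq_filter, Finset.powerset_univ,
    Finset.sum_filter]
  refine Finset.sum_congr rfl fun F _ => ?_
  by_cases hF : F.card = 2
  · simp [arrivalProb, hF]; ring
  · simp [arrivalProb, hF]

lemma choose_two_pos {N : ℕ} (hN : 2 ≤ N) : (0 : ℝ) < N.choose 2 := by
  exact_mod_cast Nat.choose_pos hN

lemma choose_two_eq (N : ℕ) : (N.choose 2 : ℝ) = N * (N - 1) / 2 := Nat.cast_choose_two ℝ N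

lemma card_pairs (N : ℕ) :
    (Finset.powersetCard 2 (Finset.univ : Finset (Fin N))).card = N.choose 2 := by simp

lemma sum_arrivalProb_one {N : ℕ} (hN : 2 ≤ N) (q : ℝ) :
    ∑ a, arrivalProb N q a = 1 := by
  have h := sum_arrivalProb (N := N) q (fun _ => 1)
  simp only [mul_one] at h
  rw [h]
  simp only [Finset.sum_const, card_pairs, Finset.card_univ, Fintype.card_fin, nsmul_eq_mul]
  have := choose_two_pos hN
  have : (0 : ℝ) < N := by exact_mod_cast (by omega : 0 < N)
  field_simp
  ring

lemma seqMass_nonneg {N T : ℕ} {q : ℝ} (hq0 : 0 < q) (hq1 : q ≤ 1) (xs : Fin T → Arrival N) :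
    0 ≤ seqMass N T q xs :=
  Finset.prod_nonneg fun _ _ => arrivalProb_nonneg hq0 hq1 _

lemma sum_seqMass {N T : ℕ} (hN : 2 ≤ N) (q : ℝ) : ∑ xs, seqMass N T q xs = 1 := by
  have h := Finset.prod_univ_sum (fun _ : Fin T => (Finset.univ : Finset (Arrival N)))
    (fun _ a => arrivalProb N q a)
  simp only [sum_arrivalProb_one hN, Finset.prod_const_one, Fintype.piFinset_univ] at h
  exact h.symm

lemma expec_const {N T : ℕ} (hN : 2 ≤ N) (q c : ℝ) : expec N T q (fun _ => c) = c := by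
  unfold expec
  rw [← Finset.sum_mul, sum_seqMass hN, one_mul]

lemma expec_mono {N T : ℕ} {q : ℝ} (hq0 : 0 < q) (hq1 : q ≤ 1)
    {X Y : (Fin T → Arrival N) → ℝ} (h : ∀ xs, X xs ≤ Y xs) : expec N T q X ≤ expec N T q Y :=
  Finset.sum_le_sum fun xs _ => mul_le_mul_of_nonneg_left (h xs) (seqMass_nonneg hq0 hq1 xs)

lemma expec_add {N T : ℕ} (q : ℝ) (X Y : (Fin T → Arrival N) → ℝ) :
    expec N T q (fun xs => X xs + Y xs) = expec N T q X + expec N T q Y := by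
  simp [expec, mul_add, Finset.sum_add_distrib]

lemma expec_sub {N T : ℕ} (q : ℝ) (X Y : (Fin T → Arrival N) → ℝ) :
    expec N T q (fun xs => X xs - Y xs) = expec N T q X - expec N T q Y := by
  simp [expec, mul_sub, Finset.sum_sub_distrib]

lemma expec_const_mul {N T : ℕ} (q c : ℝ) (X : (Fin T → Arrival N) → ℝ) :
    expec N T q (fun xs => c * X xs) = c * expec N T q X := by
  simp only [expec, Finset.mul_sum]
  exact Finset.sum_congr rfl fun _ _ => by ring

lemma expec_sum {N T : ℕ} (q : ℝ) {ι : Type*} (s : Finset ι)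
    (X : ι → (Fin T → Arrival N) → ℝ) :
    expec N T q (fun xs => ∑ i ∈ s, X i xs) = ∑ i ∈ s, expec N T q (X i) := by
  simp only [expec, Finset.mul_sum]
  exact Finset.sum_comm

/-- Independence of arrival `k` from the others: if `H · a` ignores coordinate `k`, that
coordinate may be replaced by an independent copy. -/
lemma expec_resample {N T : ℕ} (hN : 2 ≤ N) (q : ℝ) (k : Fin T)
    (H : (Fin T → Arrival N) → Arrival N → ℝ)
    (hH : ∀ xs b a, H (Function.update xs k b) a = H xs a) :
    expec N T q (fun xs => H xs (xs k)) =
      expec N T q (fun xs => ∑ a, arrivalProb N q a * H xs a) := by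
  classical
  unfold expec
  rw [← (Equiv.funSplitAt k (Arrival N)).symm.sum_comp,
    ← (Equiv.funSplitAt k (Arrival N)).symm.sum_comp, Fintype.sum_prod_type_right,
    Fintype.sum_prod_type_right]
  refine Finset.sum_congr rfl fun r _ => ?_
  have hval : ∀ a, (Equiv.funSplitAt k (Arrival N)).symm (a, r) k = a := by
    intro a; simp [Equiv.funSplitAt, Equiv.piSplitAt]
  have hupd : ∀ a b, (Equiv.funSplitAt k (Arrival N)).symm (b, r) =
      Function.update ((Equiv.funSplitAt k (Arrival N)).symm (a, r)) k b := by
    intro a b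
    ext1 j
    by_cases hj : j = k
    · subst hj; simp [Equiv.funSplitAt, Equiv.piSplitAt]
    · simp [Equiv.funSplitAt, Equiv.piSplitAt, hj]
  have hmass : ∀ a, seqMass N T q ((Equiv.funSplitAt k (Arrival N)).symm (a, r)) =
      arrivalProb N q a * ∏ j : {j // j ≠ k}, arrivalProb N q (r j) := by
    intro a
    unfold seqMass
    rw [← Fintype.prod_subtype_mul_prod_subtype (fun j => j = k)]
    congr 1
    · rw [Finset.prod_congr rfl fun j _ => by rw [j.2, hval]]
      simp
    · refine Finset.prod_congr rfl fun j _ => ?_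
      simp [Equiv.funSplitAt, Equiv.piSplitAt, j.2]
  let a₀ : Arrival N := (true, ⟨0, by omega⟩, ∅)
  have hHa : ∀ a b, H ((Equiv.funSplitAt k (Arrival N)).symm (b, r)) a =
      H ((Equiv.funSplitAt k (Arrival N)).symm (a₀, r)) a := by
    intro a b; rw [hupd a₀ b, hH]
  simp only [hval, hmass, hHa]
  rw [← Finset.sum_mul, ← Finset.sum_mul, sum_arrivalProb_one hN, one_mul, Finset.mul_sum]
  exact Finset.sum_congr rfl fun _ _ => by ring

/-! ### The policy as a Markov chain -/

/-- One transition of the chain (flag, loads): ball `t + 1` is of type `a`. -/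
noncomputable def dynStep (N T : ℕ) [NeZero N] (q : ℝ) (t : ℕ) (a : Arrival N)
    (p : Bool × (Fin N → ℕ)) : Bool × (Fin N → ℕ) :=
  (p.1 ||
    (if (1 / (10 * (N.choose 2 : ℝ))) * ((T : ℝ) - ((t : ℝ) + 1)) * q / (N : ℝ) ≤
        gap (greedyStep p.1 a p.2) (t + 1) then true else false),
   greedyStep p.1 a p.2)

/-- What is known about every reachable state at time `t`: the loads sum to `t`, and an
unset flag means that the trigger condition fails. -/
def Reach (N T : ℕ) (q : ℝ) (t : ℕ) (p : Bool × (Fin N → ℕ)) : Prop :=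
  ∑ i, p.2 i = t ∧
    (p.1 = false → gap p.2 t < (1 / (10 * (N.choose 2 : ℝ))) * ((T : ℝ) - t) * q / (N : ℝ))

/-- The bin receiving a ball of type `a`. -/
noncomputable def target {N : ℕ} [NeZero N] (flex : Bool) (a : Arrival N) (x : Fin N → ℕ) :
    Fin N := if a.1 && flex then argminBin x a.2.2 else a.2.1

lemma greedyStep_apply {N : ℕ} [NeZero N] (flex : Bool) (a : Arrival N) (x : Fin N → ℕ)
    (i : Fin N) : greedyStep flex a x i = x i + if i = target flex a x then 1 else 0 := by
  unfold greedyStep target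
  by_cases h : i = (if (a.1 && flex) = true then argminBin x a.2.2 else a.2.1)
  · rw [if_pos h, if_pos h]
  · rw [if_neg h, if_neg h]; simp

lemma sum_greedyStep {N : ℕ} [NeZero N] (flex : Bool) (a : Arrival N) (x : Fin N → ℕ) :
    ∑ i, greedyStep flex a x i = ∑ i, x i + 1 := by
  simp [greedyStep_apply, Finset.sum_add_distrib]

lemma dynOpaque_succ {N T : ℕ} [NeZero N] (q : ℝ) (xs : Fin T → Arrival N) {t : ℕ}
    (h : t < T) :
    dynOpaque N T q xs (t + 1) = dynStep N T q t (xs ⟨t, h⟩) (dynOpaque N T q xs t) := by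
  simp [dynOpaque, dynStep, h]

lemma dynOpaque_update {N T : ℕ} [NeZero N] (q : ℝ) (xs : Fin T → Arrival N) (k : Fin T)
    (b : Arrival N) (t : ℕ) (ht : t ≤ k) :
    dynOpaque N T q (Function.update xs k b) t = dynOpaque N T q xs t := by
  induction t with
  | zero => rfl
  | succ t ih =>
    have h : t < T := by omega
    rw [dynOpaque_succ q _ h, dynOpaque_succ q _ h, ih (by omega), Function.update_of_ne]
    intro h'
    have := congrArg Fin.val h'
    simp at this
    omega

lemma reach_dynOpaque {N T : ℕ} [NeZero N] (q : ℝ) (xs : Fin T → Arrival N) (t : ℕ)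
    (ht : t ≤ T) : Reach N T q t (dynOpaque N T q xs t) := by
  induction t with
  | zero =>
    constructor
    · simp [dynOpaque]
    · intro h
      have hg : gap (dynOpaque N T q xs 0).2 0 = 0 := by
        simp [gap, maxLoad, dynOpaque]
      rw [hg]
      by_contra hc
      have : (1 / (10 * (N.choose 2 : ℝ))) * (T : ℝ) * q / (N : ℝ) ≤ 0 := by
        push_cast at hc
        simpa using hc
      simp only [dynOpaque, if_pos this] at h
      exact absurd h (by decide)
  | succ t ih =>
    obtain ⟨h1, _⟩ := ih (by omega)
    rw [dynOpaque_succ q xs (by omega)]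
    refine ⟨?_, ?_⟩
    · simp only [dynStep, sum_greedyStep, h1]
    · intro h
      simp only [dynStep, Bool.or_eq_false_iff] at h
      have h2 := h.2
      by_contra hc
      rw [not_lt] at hc
      push_cast at hc
      rw [if_pos (by simpa [dynStep] using hc)] at h2
      exact absurd h2 (by decide)

/-- A one-step drift inequality on reachable states gives the inequality between expectations
at consecutive times. -/
lemma expec_step_le {N T : ℕ} [NeZero N] (hN : 2 ≤ N) {q : ℝ} (hq0 : 0 < q) (hq1 : q ≤ 1)
    {t : ℕ} (ht : t < T) (f g : Bool × (Fin N → ℕ) → ℝ)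
    (h : ∀ p, Reach N T q t p → ∑ a, arrivalProb N q a * g (dynStep N T q t a p) ≤ f p) :
    expec N T q (fun xs => g (dynOpaque N T q xs (t + 1))) ≤
      expec N T q (fun xs => f (dynOpaque N T q xs t)) := by
  have h1 := expec_resample hN q ⟨t, ht⟩
    (fun xs a => g (dynStep N T q t a (dynOpaque N T q xs t)))
    (fun xs b a => by
      rw [dynOpaque_update q xs ⟨t, ht⟩ b t le_rfl])
  simp only [dynOpaque_succ q _ ht]
  rw [h1]
  exact expec_mono hq0 hq1 fun xs => h _ (reach_dynOpaque q xs t ht.le)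

lemma maxLoad_mono_succ {N T : ℕ} [NeZero N] (q : ℝ) (xs : Fin T → Arrival N) (t : ℕ) :
    maxLoad (dynOpaque N T q xs t).2 ≤ maxLoad (dynOpaque N T q xs (t + 1)).2 := by
  by_cases h : t < T
  · rw [dynOpaque_succ q xs h]
    refine Finset.sup_mono_fun fun i _ => ?_
    simp only [dynStep, greedyStep_apply]
    exact Nat.le_add_right _ _
  · simp [dynOpaque, h]

lemma exists_maxLoad {N : ℕ} [NeZero N] (x : Fin N → ℕ) : ∃ i, maxLoad x = x i := by
  obtain ⟨i, _, hi⟩ := Finset.exists_mem_eq_sup (Finset.univ : Finset (Fin N)) ⟨0, by simp⟩ x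
  exact ⟨i, hi⟩

lemma le_maxLoad {N : ℕ} (x : Fin N → ℕ) (i : Fin N) : x i ≤ maxLoad x :=
  Finset.le_sup (f := x) (Finset.mem_univ i)

/-! ### Averaging over the target bin -/

lemma avg_target_unflexed {N : ℕ} [NeZero N] (hN : 2 ≤ N) (q : ℝ) (x : Fin N → ℕ)
    (v : Fin N → ℝ) :
    ∑ a, arrivalProb N q a * v (target false a x) = (∑ i, v i) / N := by
  rw [sum_arrivalProb]
  simp only [target, Bool.and_false, Bool.false_eq_true, if_false, Finset.sum_const, card_pairs,
    nsmul_eq_mul]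
  have hb := choose_two_pos hN
  rw [Finset.sum_div]
  refine Finset.sum_congr rfl fun p _ => ?_
  field_simp
  ring

lemma argminBin_spec {N : ℕ} [NeZero N] (x : Fin N → ℕ) {F : Finset (Fin N)}
    (hF : F.Nonempty) : argminBin x F ∈ F ∧ ∀ j ∈ F, x (argminBin x F) ≤ x j := by
  have hne : (F.filter fun i => ∀ j ∈ F, x i ≤ x j).Nonempty := by
    obtain ⟨i, hi, h⟩ := Finset.exists_min_image F x hF
    exact ⟨i, Finset.mem_filter.mpr ⟨hi, h⟩⟩
  unfold argminBin
  rw [dif_pos hne]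
  exact Finset.mem_filter.mp (Finset.min'_mem _ hne)

lemma avg_target_flexed {N : ℕ} [NeZero N] (q : ℝ) (x : Fin N → ℕ) (hN : 2 ≤ N)
    (v : Fin N → ℝ) :
    ∑ a, arrivalProb N q a * v (target true a x) =
      (1 - q) * ((∑ i, v i) / N) +
        q * ((∑ F ∈ Finset.powersetCard 2 (Finset.univ : Finset (Fin N)),
          v (argminBin x F)) / N.choose 2) := by
  rw [sum_arrivalProb]
  have hb := choose_two_pos hN
  have hn : (0 : ℝ) < N := by exact_mod_cast (by omega : 0 < N)
  simp only [target, Bool.and_true, Bool.false_eq_true, if_false, if_true, ← Finset.mul_sum,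
    Finset.sum_add_distrib, Finset.sum_const, card_pairs, Finset.card_univ, Fintype.card_fin,
    nsmul_eq_mul]
  field_simp
  ring

/-- Each bin lies in `N - 1` pairs. -/
lemma sum_pairs {N : ℕ} (hN : 2 ≤ N) (v : Fin N → ℝ) :
    ∑ F ∈ Finset.powersetCard 2 (Finset.univ : Finset (Fin N)), ∑ i ∈ F, v i =
      ((N : ℝ) - 1) * ∑ i, v i := by
  have h1 : ∀ F ∈ Finset.powersetCard 2 (Finset.univ : Finset (Fin N)),
      ∑ i ∈ F, v i = ∑ i, if i ∈ F then v i else 0 := by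
    intro F _; simp
  rw [Finset.sum_congr rfl h1, Finset.sum_comm, Finset.mul_sum]
  refine Finset.sum_congr rfl fun i _ => ?_
  rw [← Finset.sum_filter, Finset.sum_const, nsmul_eq_mul]
  congr 1
  have h2 : ((Finset.powersetCard 2 (Finset.univ : Finset (Fin N))).filter fun F => i ∈ F) =
      (Finset.univ.erase i).image fun j => ({i, j} : Finset (Fin N)) := by
    ext F
    simp only [Finset.mem_filter, Finset.mem_powersetCard, Finset.subset_univ, true_and,
      Finset.mem_image, Finset.mem_erase, Finset.mem_univ, and_true]
    constructor
    · rintro ⟨hc, hi⟩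
      obtain ⟨a, b, hab, rfl⟩ := Finset.card_eq_two.mp hc
      simp only [Finset.mem_insert, Finset.mem_singleton] at hi
      rcases hi with rfl | rfl
      · exact ⟨b, hab.symm, rfl⟩
      · exact ⟨a, hab, Finset.pair_comm _ _⟩
    · rintro ⟨j, hj, rfl⟩
      exact ⟨Finset.card_pair hj.symm, by simp⟩
  rw [h2, Finset.card_image_of_injOn]
  · rw [Finset.card_erase_of_mem (Finset.mem_univ i), Finset.card_univ, Fintype.card_fin]
    rw [Nat.cast_sub (by omega)]; simp
  · intro a ha b hb hab
    simp only [Finset.coe_erase, Set.mem_sdiff, Set.mem_singleton_iff] at ha hb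
    have : a ∈ ({i, b} : Finset (Fin N)) := by
      have h : ({i, a} : Finset (Fin N)) = {i, b} := hab
      rw [← h]; simp
    simp only [Finset.mem_insert, Finset.mem_singleton] at this
    exact this.resolve_left ha.2

/-- Placing a flexed ball in the lighter of two random bins beats uniform placement: in every
pair the lighter bin costs at most the mean of the pair, and in the pair formed by bins `i` and
`j` it saves at least half of `v i - v j`. -/
lemma sum_argmin_le {N : ℕ} [NeZero N] (hN : 2 ≤ N) (x : Fin N → ℕ) (v : Fin N → ℝ)
    (hv : ∀ i j, x i ≤ x j → v i ≤ v j) (i j : Fin N) (hij : x j ≤ x i) :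
    ∑ F ∈ Finset.powersetCard 2 (Finset.univ : Finset (Fin N)), v (argminBin x F) ≤
      ((N : ℝ) - 1) / 2 * ∑ l, v l - (v i - v j) / 2 := by
  have key : ∀ F ∈ Finset.powersetCard 2 (Finset.univ : Finset (Fin N)),
      v (argminBin x F) ≤ (∑ l ∈ F, v l) / 2 - if F = {i, j} then (v i - v j) / 2 else 0 := by
    intro F hF
    obtain ⟨a, b, hab, rfl⟩ := Finset.card_eq_two.mp (Finset.mem_powersetCard.mp hF).2
    obtain ⟨_, h2⟩ := argminBin_spec x (F := {a, b}) (by simp)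
    have ha := hv _ _ (h2 a (by simp))
    have hb := hv _ _ (h2 b (by simp))
    rw [Finset.sum_pair hab]
    split_ifs with hF'
    · have hj := hv _ _ (h2 j (by rw [hF']; simp))
      have hne : i ≠ j := by
        rintro rfl
        have := congrArg Finset.card hF'
        rw [Finset.card_pair hab] at this
        simp at this
      have hs : v a + v b = v i + v j := by
        rw [← Finset.sum_pair hab, ← Finset.sum_pair hne, hF']
      linarith
    · linarith
  refine (Finset.sum_le_sum key).trans ?_
  rw [Finset.sum_sub_distrib, ← Finset.sum_div, sum_pairs hN, Finset.sum_ite_eq']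
  by_cases hne : i = j
  · subst hne; simp; linarith
  · rw [if_pos (Finset.mem_powersetCard.mpr ⟨Finset.subset_univ _, Finset.card_pair hne⟩)]
    linarith

/-! ### The exponential potential -/

/-- The exponential potential `∑ᵢ exp (η (xᵢ - t/N))`. -/
noncomputable def expPot {N : ℕ} (η : ℝ) (t : ℕ) (x : Fin N → ℕ) : ℝ :=
  ∑ i, Real.exp (η * ((x i : ℝ) - (t : ℝ) / N))

lemma expPot_step {N : ℕ} [NeZero N] (η : ℝ) (t : ℕ) (flex : Bool) (a : Arrival N)
    (x : Fin N → ℕ) :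
    expPot η (t + 1) (greedyStep flex a x) = Real.exp (-(η / N)) * (expPot η t x +
      (Real.exp η - 1) * Real.exp (η * ((x (target flex a x) : ℝ) - (t : ℝ) / N))) := by
  have h : ∀ i, Real.exp (η * ((greedyStep flex a x i : ℕ) - ((t + 1 : ℕ) : ℝ) / N)) =
      Real.exp (-(η / N)) * (Real.exp (η * ((x i : ℝ) - (t : ℝ) / N)) +
        if i = target flex a x then
          (Real.exp η - 1) * Real.exp (η * ((x i : ℝ) - (t : ℝ) / N)) else 0) := by
    intro i
    rw [greedyStep_apply]
    split_ifs with hi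
    · have : Real.exp (-(η / N)) * (Real.exp (η * ((x i : ℝ) - (t : ℝ) / N)) +
          (Real.exp η - 1) * Real.exp (η * ((x i : ℝ) - (t : ℝ) / N))) =
          Real.exp (-(η / N)) * (Real.exp η * Real.exp (η * ((x i : ℝ) - (t : ℝ) / N))) := by
        ring
      rw [this, ← Real.exp_add, ← Real.exp_add]
      congr 1
      push_cast
      ring
    · rw [add_zero, add_zero, ← Real.exp_add]
      congr 1
      push_cast
      ring
  unfold expPot
  rw [Finset.sum_congr rfl fun i _ => h i, ← Finset.mul_sum, Finset.sum_add_distrib,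
    Finset.sum_ite_eq', if_pos (Finset.mem_univ _)]

lemma expPot_nonneg {N : ℕ} (η : ℝ) (t : ℕ) (x : Fin N → ℕ) : 0 ≤ expPot η t x :=
  Finset.sum_nonneg fun _ _ => (Real.exp_pos _).le

lemma expPot_step_le {N : ℕ} [NeZero N] {η : ℝ} (hη : 0 < η) (t : ℕ) (flex : Bool)
    (a : Arrival N) (x : Fin N → ℕ) :
    expPot η (t + 1) (greedyStep flex a x) ≤ Real.exp η * expPot η t x := by
  rw [expPot_step]
  have h1 : Real.exp (η * ((x (target flex a x) : ℝ) - (t : ℝ) / N)) ≤ expPot η t x :=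
    Finset.single_le_sum (f := fun i => Real.exp (η * ((x i : ℝ) - (t : ℝ) / N)))
      (fun _ _ => (Real.exp_pos _).le) (Finset.mem_univ _)
  have h2 : Real.exp (-(η / N)) ≤ 1 := Real.exp_le_one_iff.mpr (by
    have : 0 ≤ η / N := by positivity
    linarith)
  have h3 : 1 ≤ Real.exp η := Real.one_le_exp hη.le
  have h0 := expPot_nonneg η t x
  calc _ ≤ 1 * (expPot η t x + (Real.exp η - 1) * expPot η t x) := by
        have : 0 ≤ Real.exp η - 1 := by linarith
        gcongr
    _ = _ := by ring

/-- With `γ = q / (2 C(N,2))`, flexing makes the average of the weight of the receiving bin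
smaller than `expPot / N` by a factor `1 - γ`, up to an additive constant: the heaviest bin weighs
at least `expPot / N`, the lightest at most `1`. -/
lemma avg_weight_flexed {N : ℕ} [NeZero N] (hN : 2 ≤ N) {q : ℝ} (hq0 : 0 < q)
    {η : ℝ} (hη : 0 < η) (t : ℕ) (x : Fin N → ℕ) (hx : ∑ i, x i = t) :
    ∑ a, arrivalProb N q a * Real.exp (η * ((x (target true a x) : ℝ) - (t : ℝ) / N)) ≤
      expPot η t x / N * (1 - q / (2 * N.choose 2)) + q / (2 * N.choose 2) := by
  have hb := choose_two_pos hN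
  have hn : (0 : ℝ) < N := by exact_mod_cast (by omega : 0 < N)
  have hn1 : (0 : ℝ) < (N : ℝ) - 1 := by
    have : (2 : ℝ) ≤ N := by exact_mod_cast hN
    linarith
  set w : Fin N → ℝ := fun i => Real.exp (η * ((x i : ℝ) - (t : ℝ) / N)) with hw
  have hmono : ∀ i j, x i ≤ x j → w i ≤ w j := by
    intro i j h
    have : (x i : ℝ) ≤ x j := by exact_mod_cast h
    simp only [hw]
    gcongr
  obtain ⟨i, hi⟩ := exists_maxLoad x
  obtain ⟨j, _, hj⟩ := Finset.exists_min_image (Finset.univ : Finset (Fin N)) x ⟨0, by simp⟩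
  have hmax : expPot η t x / N ≤ w i := by
    rw [div_le_iff₀ hn]
    have : expPot η t x ≤ ∑ _l : Fin N, w i :=
      Finset.sum_le_sum fun l _ => hmono l i (hi ▸ le_maxLoad x l)
    simpa [mul_comm] using this
  have hmin : w j ≤ 1 := by
    refine Real.exp_le_one_iff.mpr (mul_nonpos_of_nonneg_of_nonpos hη.le ?_)
    rw [sub_nonpos, le_div_iff₀ hn]
    have : ∑ _l : Fin N, x j ≤ ∑ l, x l := Finset.sum_le_sum fun l _ => hj l (Finset.mem_univ l)
    rw [hx] at this
    have h2 : N * x j ≤ t := by simpa using this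
    have h3 : (N : ℝ) * x j ≤ t := by exact_mod_cast h2
    linarith
  have hsum := sum_argmin_le hN x w hmono i j (hj i (Finset.mem_univ i))
  have hE : ∑ l, w l = expPot η t x := rfl
  rw [hE] at hsum
  have h1 := avg_target_flexed q x hN w
  rw [hE] at h1
  rw [h1]
  have hbe := choose_two_eq N
  have h2 : (∑ F ∈ Finset.powersetCard 2 (Finset.univ : Finset (Fin N)),
      w (argminBin x F)) / N.choose 2 ≤
      expPot η t x / N - (expPot η t x / N - 1) / (2 * N.choose 2) := by
    rw [div_le_iff₀ hb]
    have e : (expPot η t x / N - (expPot η t x / N - 1) / (2 * N.choose 2)) * N.choose 2 =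
        ((N : ℝ) - 1) / 2 * expPot η t x - (expPot η t x / N - 1) / 2 := by
      have : expPot η t x / N * N.choose 2 = ((N : ℝ) - 1) / 2 * expPot η t x := by
        rw [hbe]; field_simp
      rw [sub_mul, this]
      field_simp
    rw [e]
    linarith
  have h3 := mul_le_mul_of_nonneg_left h2 hq0.le
  refine (add_le_add_right h3 _).trans (le_of_eq ?_)
  field_simp
  ring

/-- One-step contraction of the exponential potential while flexing. The rate
`λ = η q / (10 C(N,2) N)` is exactly the growth rate of the potential along the trigger curve. -/
lemma expPot_drift {N : ℕ} [NeZero N] (hN : 2 ≤ N) {q : ℝ} (hq0 : 0 < q) (hq1 : q ≤ 1)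
    {η : ℝ} (hη : η = q / (4 * N.choose 2)) (t : ℕ) (x : Fin N → ℕ) (hx : ∑ i, x i = t) :
    ∑ a, arrivalProb N q a * expPot η (t + 1) (greedyStep true a x) ≤
      Real.exp (-(η * ((1 / (10 * (N.choose 2 : ℝ))) * q / N))) * expPot η t x + 1 := by
  have hb := choose_two_pos hN
  have hb1 : (1 : ℝ) ≤ N.choose 2 := by exact_mod_cast Nat.choose_pos hN
  have hn : (0 : ℝ) < N := by exact_mod_cast (by omega : 0 < N)
  have hη0 : 0 < η := by rw [hη]; positivity
  have hg : q / (2 * N.choose 2) = 2 * η := by rw [hη]; field_simp; norm_num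
  have hη4 : η ≤ 1 / 4 := by
    rw [hη, div_le_div_iff₀ (by positivity) (by norm_num)]; linarith
  have hexp : Real.exp η - 1 ≤ η + η ^ 2 := by
    have := Real.abs_exp_sub_one_sub_id_le (x := η) (by rw [abs_of_pos hη0]; linarith)
    have := (abs_le.mp this).2
    linarith
  have hexp0 : 0 ≤ Real.exp η - 1 := by linarith [Real.one_le_exp hη0.le]
  have hlam : η * ((1 / (10 * (N.choose 2 : ℝ))) * q / N) = (2 / 5) * η ^ 2 / N := by
    rw [hη]; field_simp; norm_num
  have hP := expPot_nonneg η t x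
  have havg := avg_weight_flexed hN hq0 hη0 t x hx
  rw [hg] at havg
  have heq : ∑ a, arrivalProb N q a * expPot η (t + 1) (greedyStep true a x) =
      Real.exp (-(η / N)) * (expPot η t x + (Real.exp η - 1) *
        ∑ a, arrivalProb N q a * Real.exp (η * ((x (target true a x) : ℝ) - (t : ℝ) / N))) := by
    have h1 : ∀ a, arrivalProb N q a * expPot η (t + 1) (greedyStep true a x) =
        Real.exp (-(η / N)) * (arrivalProb N q a * expPot η t x + (Real.exp η - 1) *
        (arrivalProb N q a * Real.exp (η * ((x (target true a x) : ℝ) - (t : ℝ) / N)))) := by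
      intro a; rw [expPot_step]; ring
    simp only [h1]
    rw [← Finset.mul_sum, Finset.sum_add_distrib, ← Finset.sum_mul, sum_arrivalProb_one hN,
      ← Finset.mul_sum, one_mul]
  rw [heq, hlam]
  have hE1 : Real.exp (-(η / N)) ≤ 1 := Real.exp_le_one_iff.mpr (by
    have : 0 ≤ η / N := by positivity
    linarith)
  have hcoef : (Real.exp η - 1) * (1 - 2 * η) ≤ η - (2 / 5) * η ^ 2 := by
    have : (Real.exp η - 1) * (1 - 2 * η) ≤ (η + η ^ 2) * (1 - 2 * η) :=
      mul_le_mul_of_nonneg_right hexp (by linarith)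
    nlinarith [pow_pos hη0 2, pow_pos hη0 3]
  have hsmall : (Real.exp η - 1) * (2 * η) ≤ 1 := by nlinarith
  have hmul : Real.exp (-(η / N)) * (1 + (η - (2 / 5) * η ^ 2) / N) ≤
      Real.exp (-((2 / 5) * η ^ 2 / N)) := by
    have h1 := Real.add_one_le_exp ((η - (2 / 5) * η ^ 2) / N)
    calc _ ≤ Real.exp (-(η / N)) * Real.exp ((η - (2 / 5) * η ^ 2) / N) := by
          gcongr; linarith
      _ = _ := by rw [← Real.exp_add]; congr 1; ring
  calc _ ≤ Real.exp (-(η / N)) * (expPot η t x + (Real.exp η - 1) *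
          (expPot η t x / N * (1 - 2 * η) + 2 * η)) := by gcongr
    _ = Real.exp (-(η / N)) * (1 + ((Real.exp η - 1) * (1 - 2 * η)) / N) * expPot η t x +
          Real.exp (-(η / N)) * ((Real.exp η - 1) * (2 * η)) := by ring
    _ ≤ Real.exp (-(η / N)) * (1 + (η - (2 / 5) * η ^ 2) / N) * expPot η t x + 1 * 1 := by
          gcongr
    _ ≤ _ := by
          rw [one_mul]
          gcongr

/-- A bound on the expected potential: on the trigger curve the potential is of order
`exp (λ (T - t))`, and after the trigger it contracts at the same rate `λ`, so the product form of
the bound propagates. -/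
lemma expec_expPot_le {N : ℕ} [NeZero N] (hN : 2 ≤ N) {q : ℝ} (hq0 : 0 < q) (hq1 : q ≤ 1)
    {η lam : ℝ} (hη : η = q / (4 * N.choose 2))
    (hlam : lam = η * ((1 / (10 * (N.choose 2 : ℝ))) * q / N)) {T : ℕ} (hT : 0 < T) (t : ℕ)
    (ht : t ≤ T) :
    expec N T q (fun xs => expPot η t (dynOpaque N T q xs t).2) ≤
      N * Real.exp (η + lam) * Real.exp (lam * ((T : ℝ) - t)) + 1 / (1 - Real.exp (-lam)) := by
  have hb := choose_two_pos hN
  have hn : (0 : ℝ) < N := by exact_mod_cast (by omega : 0 < N)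
  have hη0 : 0 < η := by rw [hη]; positivity
  have hl0 : 0 < lam := by rw [hlam]; positivity
  have hel : Real.exp (-lam) < 1 := Real.exp_lt_one_iff.mpr (by linarith)
  set B : ℝ := 1 / (1 - Real.exp (-lam)) with hB
  have hBe : B = Real.exp (-lam) * B + 1 := by
    have : 1 - Real.exp (-lam) ≠ 0 := by linarith
    rw [hB]; field_simp; ring
  have hB0 : 0 ≤ B := by rw [hB]; exact div_nonneg zero_le_one (by linarith)
  set M : ℝ := N * Real.exp (η + lam) with hM
  -- unflagged reachable states lie below the trigger curve
  have hunfl : ∀ (s : ℕ) (p : Bool × (Fin N → ℕ)), Reach N T q s p → p.1 = false →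
      expPot η s p.2 ≤ N * Real.exp (lam * ((T : ℝ) - s)) := by
    intro s p hp hf
    have hg := hp.2 hf
    have : expPot η s p.2 ≤ ∑ _i : Fin N, Real.exp (lam * ((T : ℝ) - s)) := by
      refine Finset.sum_le_sum fun i _ => Real.exp_le_exp.mpr ?_
      have h1 : (p.2 i : ℝ) ≤ maxLoad p.2 := by exact_mod_cast le_maxLoad p.2 i
      have h2 : (p.2 i : ℝ) - (s : ℝ) / N ≤
          (1 / (10 * (N.choose 2 : ℝ))) * ((T : ℝ) - s) * q / N := by
        unfold gap at hg; linarith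
      calc _ ≤ η * ((1 / (10 * (N.choose 2 : ℝ))) * ((T : ℝ) - s) * q / N) := by gcongr
        _ = _ := by rw [hlam]; ring
    simpa using this
  let Y : ℕ → Bool × (Fin N → ℕ) → ℝ := fun s p =>
    if p.1 then expPot η s p.2 - B else M * Real.exp (lam * ((T : ℝ) - s))
  have hYstep : ∀ s, s < T → expec N T q (fun xs => Y (s + 1) (dynOpaque N T q xs (s + 1))) ≤
      Real.exp (-lam) * expec N T q (fun xs => Y s (dynOpaque N T q xs s)) := by
    intro s hs
    rw [← expec_const_mul]
    refine expec_step_le hN hq0 hq1 hs (fun p => Real.exp (-lam) * Y s p) (Y (s + 1)) ?_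
    rintro ⟨b, x⟩ hp
    cases b with
    | true =>
      have h1 := expPot_drift hN hq0 hq1 hη s x hp.1
      rw [← hlam] at h1
      simp only [Y, dynStep, Bool.true_or, if_true, mul_sub, Finset.sum_sub_distrib,
        ← Finset.sum_mul, sum_arrivalProb_one hN, one_mul]
      linarith
    | false =>
      have h1 := hunfl s _ hp rfl
      simp only at h1
      have hbd : ∀ a, Y (s + 1) (dynStep N T q s a (false, x)) ≤
          Real.exp (-lam) * Y s (false, x) := by
        intro a
        have hR : Real.exp (-lam) * Y s (false, x) =
            M * Real.exp (lam * ((T : ℝ) - ((s + 1 : ℕ) : ℝ))) := by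
          simp only [Y, Bool.false_eq_true, if_false]
          rw [mul_left_comm, ← Real.exp_add]
          congr 2
          push_cast; ring
        rw [hR]
        cases hfl : (dynStep N T q s a (false, x)).1 with
        | false => simp only [Y, hfl, Bool.false_eq_true, if_false, le_refl]
        | true =>
          simp only [Y, hfl, if_true]
          have h2 := expPot_step_le hη0 s false a x
          have h3 : Real.exp η * expPot η s x ≤
              Real.exp η * (N * Real.exp (lam * ((T : ℝ) - s))) := by gcongr
          have h4 : Real.exp η * (N * Real.exp (lam * ((T : ℝ) - s))) =
              M * Real.exp (lam * ((T : ℝ) - ((s + 1 : ℕ) : ℝ))) := by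
            rw [hM, mul_left_comm, mul_assoc, ← Real.exp_add, ← Real.exp_add]
            congr 2
            push_cast; ring
          have h5 : (dynStep N T q s a (false, x)).2 = greedyStep false a x := rfl
          rw [h5]
          linarith
      calc _ ≤ ∑ a, arrivalProb N q a * (Real.exp (-lam) * Y s (false, x)) :=
            Finset.sum_le_sum fun a _ =>
              mul_le_mul_of_nonneg_left (hbd a) (arrivalProb_nonneg hq0 hq1 a)
        _ = _ := by rw [← Finset.sum_mul, sum_arrivalProb_one hN, one_mul]
  have hY : ∀ s, s ≤ T → expec N T q (fun xs => Y s (dynOpaque N T q xs s)) ≤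
      M * Real.exp (lam * ((T : ℝ) - s)) := by
    intro s
    induction s with
    | zero =>
      intro _
      rw [← expec_const (T := T) hN q (M * Real.exp (lam * ((T : ℝ) - ((0 : ℕ) : ℝ))))]
      refine expec_mono hq0 hq1 fun xs => ?_
      have : ¬ ((1 / (10 * (N.choose 2 : ℝ))) * (T : ℝ) * q / (N : ℝ) ≤ 0) := by
        have : (0 : ℝ) < T := by exact_mod_cast hT
        rw [not_le]; positivity
      have hf : (dynOpaque N T q xs 0).1 = false := by
        simp only [dynOpaque, if_neg this]
      simp only [Y, hf, Bool.false_eq_true, if_false, le_refl]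
    | succ s ih =>
      intro hs
      refine (hYstep s (by omega)).trans ?_
      calc _ ≤ Real.exp (-lam) * (M * Real.exp (lam * ((T : ℝ) - s))) := by
            gcongr; exact ih (by omega)
        _ = _ := by
            rw [mul_left_comm, ← Real.exp_add]
            congr 2
            push_cast; ring
  have hfin : expec N T q (fun xs => expPot η t (dynOpaque N T q xs t).2) ≤
      expec N T q (fun xs => Y t (dynOpaque N T q xs t) + B) := by
    refine expec_mono hq0 hq1 fun xs => ?_
    have hp := reach_dynOpaque q xs t ht
    cases hf : (dynOpaque N T q xs t).1 with
    | true => simp only [Y, hf, if_true]; linarith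
    | false =>
      simp only [Y, hf, Bool.false_eq_true, if_false]
      have h1 := hunfl t _ hp hf
      have h2 : (N : ℝ) ≤ M := by
        rw [hM]
        exact le_mul_of_one_le_right hn.le (Real.one_le_exp (by linarith))
      have h3 : N * Real.exp (lam * ((T : ℝ) - t)) ≤ M * Real.exp (lam * ((T : ℝ) - t)) := by
        gcongr
      linarith
  rw [expec_add, expec_const hN] at hfin
  linarith [hY t ht]

/-! ### The cycle length -/

lemma hitTime_le {N : ℕ} (T S : ℕ) (x : ℕ → Fin N → ℕ) : hitTime T S x ≤ T := by
  unfold hitTime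
  split_ifs with h
  · have := (Finset.mem_filter.mp (Finset.min'_mem _ h)).1
    rw [Finset.mem_range] at this
    omega
  · exact le_rfl

lemma hitTime_eq_or {N : ℕ} (T S : ℕ) (x : ℕ → Fin N → ℕ) :
    hitTime T S x = T ∨ maxLoad (x (hitTime T S x)) = S := by
  by_cases h : ((Finset.range (T + 1)).filter fun t => maxLoad (x t) = S).Nonempty
  · right
    have h1 := (Finset.mem_filter.mp (Finset.min'_mem _ h)).2
    have h2 : hitTime T S x = _ := dif_pos h
    rw [h2]
    exact h1
  · left
    exact dif_neg h

lemma le_hitTime {N T S : ℕ} [NeZero N] (q : ℝ) (xs : Fin T → Arrival N) (hST : S ≤ T) :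
    S ≤ hitTime T S (fun t => (dynOpaque N T q xs t).2) := by
  rcases hitTime_eq_or T S (fun t => (dynOpaque N T q xs t).2) with h | h
  · rw [h]; exact hST
  · obtain ⟨i, hi⟩ := exists_maxLoad
      (dynOpaque N T q xs (hitTime T S fun t => (dynOpaque N T q xs t).2)).2
    have h1 := (reach_dynOpaque q xs _ (hitTime_le T S fun t => (dynOpaque N T q xs t).2)).1
    have h2 := Finset.single_le_sum (f := (dynOpaque N T q xs
      (hitTime T S fun t => (dynOpaque N T q xs t).2)).2) (fun _ _ => Nat.zero_le _)
      (Finset.mem_univ i)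
    omega

/-- The time lost at the end of the cycle is at most the number of times below `T` at which the maximum
load has already reached `S`. -/
lemma sub_hitTime_le {N T S : ℕ} [NeZero N] (q : ℝ) (xs : Fin T → Arrival N) :
    (T : ℝ) - hitTime T S (fun t => (dynOpaque N T q xs t).2) ≤
      ∑ t ∈ Finset.range T, if S ≤ maxLoad (dynOpaque N T q xs t).2 then (1 : ℝ) else 0 := by
  rcases hitTime_eq_or T S (fun t => (dynOpaque N T q xs t).2) with h | h
  · rw [h, sub_self]
    exact Finset.sum_nonneg fun _ _ => by split_ifs <;> norm_num
  · set R := hitTime T S (fun t => (dynOpaque N T q xs t).2) with hR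
    have hRT : R ≤ T := hitTime_le _ _ _
    have hmono : Monotone fun t => maxLoad (dynOpaque N T q xs t).2 :=
      monotone_nat_of_le_succ (maxLoad_mono_succ q xs)
    have h1 : ∑ t ∈ Finset.Ico R T, (1 : ℝ) ≤ ∑ t ∈ Finset.range T,
        if S ≤ maxLoad (dynOpaque N T q xs t).2 then (1 : ℝ) else 0 := by
      calc _ ≤ ∑ t ∈ Finset.Ico R T,
            if S ≤ maxLoad (dynOpaque N T q xs t).2 then (1 : ℝ) else 0 := by
            refine Finset.sum_le_sum fun t ht => ?_
            have h2 := hmono (Finset.mem_Ico.mp ht).1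
            simp only at h2 h
            rw [if_pos (by omega)]
        _ ≤ _ := by
            refine Finset.sum_le_sum_of_subset_of_nonneg ?_ fun _ _ _ => by
              split_ifs <;> norm_num
            intro t ht
            exact Finset.mem_range.mpr (Finset.mem_Ico.mp ht).2
    rw [Finset.sum_const, Nat.card_Ico, nsmul_eq_mul, mul_one, Nat.cast_sub hRT] at h1
    exact h1

lemma sum_exp_le {a : ℝ} (ha : 0 < a) (T : ℕ) :
    ∑ t ∈ Finset.range T, Real.exp (-(a * ((T : ℝ) - t))) ≤ 1 / (1 - Real.exp (-a)) := by
  have hr : Real.exp (-a) < 1 := Real.exp_lt_one_iff.mpr (by linarith)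
  have h1 : ∑ t ∈ Finset.range T, Real.exp (-(a * ((T : ℝ) - t))) =
      ∑ k ∈ Finset.range T, Real.exp (-a) ^ (k + 1) := by
    rw [← Finset.sum_range_reflect]
    refine Finset.sum_congr rfl fun k hk => ?_
    have hk' : k < T := Finset.mem_range.mp hk
    rw [← Real.exp_nat_mul]
    congr 1
    rw [Nat.sub_sub, Nat.cast_sub (by omega)]
    push_cast; ring
  have h2 : ∑ k ∈ Finset.range T, Real.exp (-a) ^ (k + 1) ≤
      ∑ k ∈ Finset.range T, Real.exp (-a) ^ k :=
    Finset.sum_le_sum fun k _ =>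
      pow_le_pow_of_le_one (Real.exp_pos _).le hr.le (Nat.le_succ k)
  have h3 : ∑ k ∈ Finset.range T, Real.exp (-a) ^ k ≤ 1 / (1 - Real.exp (-a)) := by
    rw [geom_sum_eq hr.ne, one_div, ← neg_div_neg_eq, neg_sub, neg_sub, div_eq_mul_inv]
    refine mul_le_of_le_one_left (inv_nonneg.mpr (by linarith)) ?_
    linarith [pow_pos (Real.exp_pos (-a)) T]
  linarith

/-- The expected time lost at the end of the cycle is bounded uniformly in `S`. -/
lemma exists_expec_loss_le {N : ℕ} [NeZero N] (hN : 2 ≤ N) {q : ℝ} (hq0 : 0 < q)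
    (hq1 : q ≤ 1) : ∃ A : ℝ, 0 ≤ A ∧ ∀ T S : ℕ, 0 < T → T ≤ N * S →
      expec N T q (fun xs => (T : ℝ) - hitTime T S (fun t => (dynOpaque N T q xs t).2)) ≤ A := by
  have hb := choose_two_pos hN
  have hb1 : (1 : ℝ) ≤ N.choose 2 := by exact_mod_cast Nat.choose_pos hN
  have hn : (0 : ℝ) < N := by exact_mod_cast (by omega : 0 < N)
  obtain ⟨η, hη⟩ : ∃ η : ℝ, η = q / (4 * N.choose 2) := ⟨_, rfl⟩
  obtain ⟨lam, hlam⟩ : ∃ lam : ℝ, lam = η * ((1 / (10 * (N.choose 2 : ℝ))) * q / N) := ⟨_, rfl⟩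
  have hη0 : 0 < η := by rw [hη]; positivity
  have hl0 : 0 < lam := by rw [hlam]; positivity
  have hlη : lam < η / N := by
    have h1 : (1 / (10 * (N.choose 2 : ℝ))) * q < 1 := by
      rw [one_div_mul_eq_div, div_lt_one (by positivity)]; linarith
    calc lam = η / N * ((1 / (10 * (N.choose 2 : ℝ))) * q) := by rw [hlam]; ring
      _ < η / N * 1 := by gcongr
      _ = _ := mul_one _
  have hηn : 0 < η / N := by positivity
  have hd : 0 < η / N - lam := by linarith
  have e1 : 0 < 1 - Real.exp (-lam) := by
    linarith [Real.exp_lt_one_iff.mpr (show -lam < 0 by linarith)]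
  have e2 : 0 < 1 - Real.exp (-(η / N - lam)) := by
    linarith [Real.exp_lt_one_iff.mpr (show -(η / N - lam) < 0 by linarith)]
  have e3 : 0 < 1 - Real.exp (-(η / N)) := by
    linarith [Real.exp_lt_one_iff.mpr (show -(η / N) < 0 by linarith)]
  refine ⟨N * Real.exp (η + lam) * (1 / (1 - Real.exp (-(η / N - lam)))) +
    1 / (1 - Real.exp (-lam)) * (1 / (1 - Real.exp (-(η / N)))), by positivity, ?_⟩
  intro T S hT hTS
  have hTS' : (T : ℝ) ≤ N * S := by exact_mod_cast hTS
  have hterm : ∀ t ∈ Finset.range T, expec N T q (fun xs =>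
      if S ≤ maxLoad (dynOpaque N T q xs t).2 then (1 : ℝ) else 0) ≤
      N * Real.exp (η + lam) * Real.exp (-((η / N - lam) * ((T : ℝ) - t))) +
        1 / (1 - Real.exp (-lam)) * Real.exp (-(η / N * ((T : ℝ) - t))) := by
    intro t ht
    have ht' : t < T := Finset.mem_range.mp ht
    -- Markov inequality for the potential
    have h1 : expec N T q (fun xs =>
        if S ≤ maxLoad (dynOpaque N T q xs t).2 then (1 : ℝ) else 0) ≤
        expec N T q (fun xs => Real.exp (-(η / N * ((T : ℝ) - t))) *
          expPot η t (dynOpaque N T q xs t).2) := by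
      refine expec_mono hq0 hq1 fun xs => ?_
      split_ifs with hS
      · obtain ⟨i, hi⟩ := exists_maxLoad (dynOpaque N T q xs t).2
        have h2 : Real.exp (η * (((dynOpaque N T q xs t).2 i : ℝ) - (t : ℝ) / N)) ≤
            expPot η t (dynOpaque N T q xs t).2 :=
          Finset.single_le_sum (f := fun i =>
            Real.exp (η * (((dynOpaque N T q xs t).2 i : ℝ) - (t : ℝ) / N)))
            (fun _ _ => (Real.exp_pos _).le) (Finset.mem_univ i)
        have h3 : (S : ℝ) ≤ (dynOpaque N T q xs t).2 i := by
          rw [hi] at hS; exact_mod_cast hS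
        calc (1 : ℝ) ≤ Real.exp (-(η / N * ((T : ℝ) - t))) *
              Real.exp (η * (((dynOpaque N T q xs t).2 i : ℝ) - (t : ℝ) / N)) := by
              rw [← Real.exp_add]
              refine Real.one_le_exp ?_
              have h4 : (T : ℝ) / N ≤ (dynOpaque N T q xs t).2 i := by
                rw [div_le_iff₀ hn]
                nlinarith
              have h5 : -(η / N * ((T : ℝ) - t)) +
                  η * (((dynOpaque N T q xs t).2 i : ℝ) - (t : ℝ) / N) =
                  η * (((dynOpaque N T q xs t).2 i : ℝ) - (T : ℝ) / N) := by ring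
              rw [h5]
              exact mul_nonneg hη0.le (by linarith)
          _ ≤ _ := by gcongr
      · exact mul_nonneg (Real.exp_pos _).le (expPot_nonneg _ _ _)
    rw [expec_const_mul] at h1
    refine h1.trans ?_
    have h2 := expec_expPot_le hN hq0 hq1 hη hlam hT t ht'.le
    refine (mul_le_mul_of_nonneg_left h2 (Real.exp_pos _).le).trans (le_of_eq ?_)
    have h3 : Real.exp (-((η / N - lam) * ((T : ℝ) - t))) =
        Real.exp (-(η / N * ((T : ℝ) - t))) * Real.exp (lam * ((T : ℝ) - t)) := by
      rw [← Real.exp_add]; congr 1; ring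
    rw [h3]; ring
  calc _ ≤ expec N T q (fun xs => ∑ t ∈ Finset.range T,
          if S ≤ maxLoad (dynOpaque N T q xs t).2 then (1 : ℝ) else 0) :=
        expec_mono hq0 hq1 fun xs => sub_hitTime_le q xs
    _ = ∑ t ∈ Finset.range T, expec N T q (fun xs =>
          if S ≤ maxLoad (dynOpaque N T q xs t).2 then (1 : ℝ) else 0) := expec_sum _ _ _
    _ ≤ _ := Finset.sum_le_sum hterm
    _ = N * Real.exp (η + lam) *
          (∑ t ∈ Finset.range T, Real.exp (-((η / N - lam) * ((T : ℝ) - t)))) +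
        1 / (1 - Real.exp (-lam)) *
          ∑ t ∈ Finset.range T, Real.exp (-(η / N * ((T : ℝ) - t))) := by
        rw [Finset.sum_add_distrib, Finset.mul_sum, Finset.mul_sum]
    _ ≤ _ := by
        have := sum_exp_le hd T
        have := sum_exp_le hηn T
        gcongr

/-! ### The discount count -/

/-- The quadratic imbalance `∑ᵢ (xᵢ - t/N)²`. -/
noncomputable def sqPot {N : ℕ} (t : ℕ) (x : Fin N → ℕ) : ℝ :=
  ∑ i, ((x i : ℝ) - (t : ℝ) / N) ^ 2

lemma sqPot_nonneg {N : ℕ} (t : ℕ) (x : Fin N → ℕ) : 0 ≤ sqPot t x :=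
  Finset.sum_nonneg fun _ _ => sq_nonneg _

lemma sum_centered {N : ℕ} [NeZero N] (t : ℕ) (x : Fin N → ℕ) (hx : ∑ i, x i = t) :
    ∑ i, ((x i : ℝ) - (t : ℝ) / N) = 0 := by
  have hn : (N : ℝ) ≠ 0 := by exact_mod_cast NeZero.ne N
  rw [Finset.sum_sub_distrib, ← Nat.cast_sum, hx, Finset.sum_const, Finset.card_univ,
    Fintype.card_fin, nsmul_eq_mul]
  field_simp
  ring

lemma sqPot_step {N : ℕ} [NeZero N] (t : ℕ) (flex : Bool) (a : Arrival N) (x : Fin N → ℕ)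
    (hx : ∑ i, x i = t) :
    sqPot (t + 1) (greedyStep flex a x) ≤
      sqPot t x + 2 * ((x (target flex a x) : ℝ) - (t : ℝ) / N) + 1 := by
  have hn : (0 : ℝ) < N := by exact_mod_cast Nat.pos_of_ne_zero (NeZero.ne N)
  have h : ∀ i, ((greedyStep flex a x i : ℕ) - ((t + 1 : ℕ) : ℝ) / N) ^ 2 =
      ((x i : ℝ) - (t : ℝ) / N) ^ 2 - 2 / N * ((x i : ℝ) - (t : ℝ) / N) + 1 / (N : ℝ) ^ 2 +
        if i = target flex a x then 2 * ((x i : ℝ) - (t : ℝ) / N) + 1 - 2 / N else 0 := by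
    intro i
    rw [greedyStep_apply]
    split_ifs with hi
    · push_cast; ring
    · push_cast; ring
  unfold sqPot
  rw [Finset.sum_congr rfl fun i _ => h i, Finset.sum_add_distrib, Finset.sum_ite_eq',
    if_pos (Finset.mem_univ _), Finset.sum_add_distrib, Finset.sum_sub_distrib, ← Finset.mul_sum,
    sum_centered t x hx, Finset.sum_const, Finset.card_univ, Fintype.card_fin, nsmul_eq_mul]
  have h2 : (N : ℝ) * (1 / (N : ℝ) ^ 2) = 1 / N := by field_simp
  have h3 : 2 / (N : ℝ) = 2 * (1 / N) := by ring
  have h4 : 0 < 1 / (N : ℝ) := by positivity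
  rw [h2, h3]
  linarith

/-- The expected number of flagged periods is at most `√T / κ` with `κ = q / (10 C(N,2) N)`.
Before the trigger the quadratic imbalance grows by at most one per step in expectation, and at
the trigger time `t` the remaining time `T - t` is at most `gap / κ`, hence at most
`(gap² / √T + √T) / (2κ)`. -/
lemma expec_flag_le {N : ℕ} [NeZero N] (hN : 2 ≤ N) {q : ℝ} (hq0 : 0 < q) (hq1 : q ≤ 1)
    {κ : ℝ} (hκ : κ = (1 / (10 * (N.choose 2 : ℝ))) * q / N) {T : ℕ} (hT : 0 < T) :
    expec N T q (fun xs => ∑ t ∈ Finset.range T,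
      if (dynOpaque N T q xs t).1 then (1 : ℝ) else 0) ≤ Real.sqrt T / κ := by
  have hb := choose_two_pos hN
  have hn : (0 : ℝ) < N := by exact_mod_cast (by omega : 0 < N)
  have hT' : (0 : ℝ) < T := by exact_mod_cast hT
  have hκ0 : 0 < κ := by rw [hκ]; positivity
  set r := Real.sqrt T with hr
  have hr0 : 0 < r := Real.sqrt_pos.mpr hT'
  have hrr : r * r = T := Real.mul_self_sqrt hT'.le
  let U : ℕ → (Fin N → ℕ) → ℝ := fun s x =>
    1 / (2 * κ) * (sqPot s x / r + r + ((T : ℝ) - s) / r)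
  let Y : ℕ → Bool × (Fin N → ℕ) → ℝ := fun s p => if p.1 then (T : ℝ) - s else U s p.2
  have htrig : ∀ (s : ℕ) (x : Fin N → ℕ), s ≤ T →
      (1 / (10 * (N.choose 2 : ℝ))) * ((T : ℝ) - s) * q / N ≤ gap x s →
      (T : ℝ) - s ≤ U s x := by
    intro s x hs hg
    have hs' : (0 : ℝ) ≤ (T : ℝ) - s := by
      have : (s : ℝ) ≤ T := by exact_mod_cast hs
      linarith
    have h1 : κ * ((T : ℝ) - s) ≤ gap x s := by
      refine le_trans (le_of_eq ?_) hg
      rw [hκ]; ring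
    obtain ⟨i, hi⟩ := exists_maxLoad x
    have h2 : gap x s ^ 2 ≤ sqPot s x := by
      unfold gap
      rw [hi]
      exact Finset.single_le_sum (f := fun i => ((x i : ℝ) - (s : ℝ) / N) ^ 2)
        (fun _ _ => sq_nonneg _) (Finset.mem_univ i)
    have h3 : 2 * gap x s ≤ sqPot s x / r + r := by
      rw [← sub_le_iff_le_add, le_div_iff₀ hr0]
      nlinarith [sq_nonneg (gap x s - r)]
    have h4 : 0 ≤ ((T : ℝ) - s) / r := by positivity
    simp only [U]
    rw [one_div_mul_eq_div, le_div_iff₀ (by positivity)]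
    linarith
  have hstep : ∀ s, s < T →
      expec N T q (fun xs => Y (s + 1) (dynOpaque N T q xs (s + 1))) ≤
      expec N T q (fun xs => Y s (dynOpaque N T q xs s)) -
        expec N T q (fun xs => if (dynOpaque N T q xs s).1 then (1 : ℝ) else 0) := by
    intro s hs
    rw [← expec_sub]
    refine expec_step_le hN hq0 hq1 hs (fun p => Y s p - if p.1 then (1 : ℝ) else 0)
      (Y (s + 1)) ?_
    rintro ⟨b, x⟩ hp
    cases b with
    | true =>
      simp only [Y, dynStep, Bool.true_or, if_true, ← Finset.sum_mul, sum_arrivalProb_one hN,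
        one_mul]
      push_cast
      linarith
    | false =>
      have hx : ∑ i, x i = s := hp.1
      have hbd : ∀ a, Y (s + 1) (dynStep N T q s a (false, x)) ≤
          U s x + 1 / (κ * r) * ((x (target false a x) : ℝ) - (s : ℝ) / N) := by
        intro a
        have h1 : Y (s + 1) (dynStep N T q s a (false, x)) ≤
            U (s + 1) (greedyStep false a x) := by
          by_cases hg : (1 / (10 * (N.choose 2 : ℝ))) * ((T : ℝ) - ((s : ℝ) + 1)) * q / (N : ℝ) ≤
              gap (greedyStep false a x) (s + 1)
          · simp only [Y, dynStep, Bool.false_or, if_pos hg, if_true]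
            exact htrig (s + 1) _ hs (by push_cast; exact hg)
          · simp only [Y, dynStep, Bool.false_or, if_neg hg, Bool.false_eq_true, if_false, le_refl]
        refine h1.trans ?_
        have h2 := sqPot_step s false a x hx
        have h3 : U (s + 1) (greedyStep false a x) ≤ 1 / (2 * κ) *
            ((sqPot s x + 2 * ((x (target false a x) : ℝ) - (s : ℝ) / N) + 1) / r + r +
              ((T : ℝ) - ((s + 1 : ℕ) : ℝ)) / r) := by
          simp only [U]
          gcongr
        refine h3.trans (le_of_eq ?_)
        simp only [U]
        push_cast
        field_simp
        ring
      have hz : ∑ a, arrivalProb N q a * ((x (target false a x) : ℝ) - (s : ℝ) / N) = 0 := by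
        rw [avg_target_unflexed hN q x (fun i => (x i : ℝ) - (s : ℝ) / N),
          sum_centered s x hx, zero_div]
      calc _ ≤ ∑ a, arrivalProb N q a *
            (U s x + 1 / (κ * r) * ((x (target false a x) : ℝ) - (s : ℝ) / N)) :=
            Finset.sum_le_sum fun a _ =>
              mul_le_mul_of_nonneg_left (hbd a) (arrivalProb_nonneg hq0 hq1 a)
        _ = U s x * ∑ a, arrivalProb N q a + 1 / (κ * r) *
            ∑ a, arrivalProb N q a * ((x (target false a x) : ℝ) - (s : ℝ) / N) := by
            rw [Finset.mul_sum, Finset.mul_sum, ← Finset.sum_add_distrib]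
            exact Finset.sum_congr rfl fun _ _ => by ring
        _ = U s x := by rw [hz, sum_arrivalProb_one hN]; ring
        _ = _ := by simp [Y]
  have htel : ∀ s, s ≤ T → expec N T q (fun xs => Y s (dynOpaque N T q xs s)) +
      ∑ t ∈ Finset.range s, expec N T q
        (fun xs => if (dynOpaque N T q xs t).1 then (1 : ℝ) else 0) ≤ r / κ := by
    intro s
    induction s with
    | zero =>
      intro _
      rw [Finset.sum_range_zero, add_zero, ← expec_const (T := T) hN q (r / κ)]
      refine expec_mono hq0 hq1 fun xs => ?_
      have hthr : ¬ ((1 / (10 * (N.choose 2 : ℝ))) * (T : ℝ) * q / (N : ℝ) ≤ 0) := by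
        rw [not_le]; positivity
      have hf : dynOpaque N T q xs 0 = (false, fun _ => 0) := by
        simp only [dynOpaque, if_neg hthr]
      rw [hf]
      have hTr : (T : ℝ) / r = r := by rw [← hrr]; field_simp
      simp only [Y, U, sqPot, Bool.false_eq_true, if_false]
      have : ∑ _i : Fin N, (((0 : ℕ) : ℝ) - ((0 : ℕ) : ℝ) / N) ^ 2 = 0 := by simp
      rw [this, Nat.cast_zero, sub_zero, hTr]
      apply le_of_eq
      field_simp
      ring
    | succ s ih =>
      intro hs
      rw [Finset.sum_range_succ]
      linarith [ih (by omega), hstep s (by omega)]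
  have hfin := htel T le_rfl
  rw [expec_sum]
  have hpos : 0 ≤ expec N T q (fun xs => Y T (dynOpaque N T q xs T)) := by
    rw [← expec_const (T := T) hN q 0]
    refine expec_mono hq0 hq1 fun xs => ?_
    simp only [Y, U, sub_self, zero_div]
    have := sqPot_nonneg T (dynOpaque N T q xs T).2
    split_ifs
    · exact le_rfl
    · positivity
  linarith

lemma dynFlexCount_le {N T : ℕ} [NeZero N] (q : ℝ) (S : ℕ) (xs : Fin T → Arrival N) :
    (dynFlexCount N T q S xs : ℝ) ≤ ∑ t ∈ Finset.range T,
      if (dynOpaque N T q xs t).1 then (1 : ℝ) else 0 := by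
  unfold dynFlexCount
  rw [Nat.cast_sum]
  calc _ ≤ ∑ t ∈ Finset.range (hitTime T S fun u => (dynOpaque N T q xs u).2),
        if (dynOpaque N T q xs t).1 then (1 : ℝ) else 0 := by
        refine Finset.sum_le_sum fun t _ => ?_
        cases (dynOpaque N T q xs t).1
        · simp
        · simp only [Bool.and_true, if_true]
          split_ifs <;> norm_num
    _ ≤ _ := by
        refine Finset.sum_le_sum_of_subset_of_nonneg ?_ fun _ _ _ => by split_ifs <;> norm_num
        exact Finset.range_mono (hitTime_le _ _ _)

/-! ### The cost comparison -/

/-- **Theorem 4(i)** (near-optimality of the dynamic opaque selling policy in the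
large-inventory regime): if `K_S ∈ Θ(S)`, `h_S ∈ Θ(1/S)` and `δ_S ≤ min(d/√S, 1)`,
then there exist `C` and `S₀` with `C^d(S) - C⋆(S) ≤ C/S` for all `S ≥ S₀`. -/
theorem dynamic_opaque_near_optimal (N : ℕ) [NeZero N] (hN : 2 ≤ N) (q : ℝ)
    (hq0 : 0 < q) (hq1 : q ≤ 1)
    (k₁ k₂ h₁ h₂ d : ℝ) (hk₁ : 0 < k₁) (hk₂ : 0 < k₂) (hh₁ : 0 < h₁) (hh₂ : 0 < h₂)
    (hd : 0 < d) (K h δ : ℕ → ℝ)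
    (hK : ∀ S : ℕ, 2 ≤ S → k₁ * (S : ℝ) ≤ K S ∧ K S ≤ k₂ * (S : ℝ))
    (hh : ∀ S : ℕ, 2 ≤ S → h₁ / (S : ℝ) ≤ h S ∧ h S ≤ h₂ / (S : ℝ))
    (hδ : ∀ S : ℕ, 2 ≤ S → 0 ≤ δ S ∧ δ S ≤ min (d / Real.sqrt (S : ℝ)) 1) :
    ∃ C : ℝ, ∃ S₀ : ℕ, ∀ S : ℕ, S₀ ≤ S →
      dynCost N q (K S) (h S) (δ S) S - optCost N (K S) (h S) S ≤ C / (S : ℝ) := by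
  have hb := choose_two_pos hN
  have hn : (0 : ℝ) < N := by exact_mod_cast (by omega : 0 < N)
  obtain ⟨A, hA0, hA⟩ := exists_expec_loss_le hN hq0 hq1
  obtain ⟨κ, hκ⟩ : ∃ κ : ℝ, κ = (1 / (10 * (N.choose 2 : ℝ))) * q / N := ⟨_, rfl⟩
  have hκ0 : 0 < κ := by rw [hκ]; positivity
  refine ⟨k₂ * A + h₂ / 2 * (N * A) + d * (Real.sqrt N / κ), 2, fun S hS => ?_⟩
  have hS0 : (0 : ℝ) < S := by exact_mod_cast (by omega : 0 < S)
  obtain ⟨T, hTdef⟩ : ∃ T : ℕ, T = N * (S - 1) + 1 := ⟨_, rfl⟩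
  have hTS : S ≤ T := by
    have : 1 * (S - 1) ≤ N * (S - 1) := Nat.mul_le_mul_right _ (by omega)
    omega
  have hTN : T ≤ N * S := by
    have : N * S = N * (S - 1) + N := by
      obtain ⟨m, rfl⟩ : ∃ m, S = m + 1 := ⟨S - 1, by omega⟩
      rw [Nat.add_sub_cancel]; ring
    omega
  have hTS' : (S : ℝ) ≤ T := by exact_mod_cast hTS
  have hTN' : (T : ℝ) ≤ N * S := by exact_mod_cast hTN
  have hT0 : (0 : ℝ) < T := by linarith
  have hTc : (N : ℝ) * ((S : ℝ) - 1) + 1 = T := by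
    rw [hTdef]; push_cast [Nat.cast_sub (show 1 ≤ S by omega)]; ring
  let R : (Fin T → Arrival N) → ℝ := fun xs =>
    (hitTime T S (fun t => (dynOpaque N T q xs t).2) : ℝ)
  have hER : dynER N q S = expec N T q R := by subst hTdef; rfl
  have hER2 : dynER2 N q S = expec N T q (fun xs => R xs ^ 2) := by subst hTdef; rfl
  have hED : dynED N q S = expec N T q (fun xs => (dynFlexCount N T q S xs : ℝ)) := by
    subst hTdef; rfl
  have hRS : ∀ xs, (S : ℝ) ≤ R xs := fun xs => by
    simp only [R]; exact_mod_cast le_hitTime q xs hTS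
  have hRT : ∀ xs, R xs ≤ T := fun xs => by
    simp only [R]; exact_mod_cast hitTime_le T S _
  have hloss : (T : ℝ) - dynER N q S ≤ A := by
    have := hA T S (by omega) hTN
    rw [expec_sub q (fun _ => (T : ℝ)) R, expec_const hN] at this
    rw [hER]; exact this
  have hERS : (S : ℝ) ≤ dynER N q S := by
    rw [hER, ← expec_const (T := T) hN q (S : ℝ)]
    exact expec_mono hq0 hq1 hRS
  have hER0 : 0 < dynER N q S := by linarith
  have hED' : dynED N q S ≤ Real.sqrt T / κ := by
    rw [hED]
    exact (expec_mono hq0 hq1 fun xs => dynFlexCount_le q S xs).trans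
      (expec_flag_le hN hq0 hq1 hκ (by omega))
  have hER2' : (T : ℝ) * dynER N q S - dynER2 N q S ≤ T * A := by
    have h1 : expec N T q (fun xs => T * R xs - R xs ^ 2) ≤
        expec N T q (fun xs => (T : ℝ) * (T - R xs)) := by
      refine expec_mono hq0 hq1 fun xs => ?_
      nlinarith [hRT xs, hRS xs]
    rw [expec_sub, expec_const_mul, expec_const_mul, expec_sub q (fun _ => (T : ℝ)) R,
      expec_const hN, ← hER, ← hER2] at h1
    exact h1.trans (mul_le_mul_of_nonneg_left hloss hT0.le)
  obtain ⟨hK1, hK2⟩ := hK S hS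
  obtain ⟨hh1, hh2⟩ := hh S hS
  obtain ⟨hδ0, hδ1⟩ := hδ S hS
  have hh0 : 0 ≤ h S := le_trans (by positivity) hh1
  have hK0 : 0 ≤ K S := le_trans (by positivity) hK1
  have hδd : δ S ≤ d / Real.sqrt S := hδ1.trans (min_le_left _ _)
  have part1 : K S / dynER N q S - K S / T ≤ k₂ * A / S := by
    have e : K S / dynER N q S - K S / T = K S * (T - dynER N q S) / (dynER N q S * T) := by
      field_simp
    rw [e]
    calc _ ≤ (k₂ * S) * A / (dynER N q S * T) := by
          have : K S * (T - dynER N q S) ≤ (k₂ * S) * A :=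
            (mul_le_mul_of_nonneg_left hloss hK0).trans (mul_le_mul_of_nonneg_right hK2 hA0)
          gcongr
      _ ≤ (k₂ * S) * A / (S * S) := by gcongr
      _ = _ := by field_simp
  have part2 : (h S / 2) * (T - dynER2 N q S / dynER N q S) ≤ h₂ / 2 * (N * A) / S := by
    have h1 : T - dynER2 N q S / dynER N q S ≤ N * A := by
      have e : T - dynER2 N q S / dynER N q S =
          (T * dynER N q S - dynER2 N q S) / dynER N q S := by field_simp
      rw [e]
      calc _ ≤ T * A / dynER N q S := by gcongr
        _ ≤ (N * S) * A / S := by gcongr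
        _ = _ := by field_simp
    calc _ ≤ (h S / 2) * (N * A) := by gcongr
      _ ≤ (h₂ / S / 2) * (N * A) := by gcongr
      _ = _ := by ring
  have part3 : δ S * dynED N q S / dynER N q S ≤ d * (Real.sqrt N / κ) / S := by
    have hsS : 0 < Real.sqrt S := Real.sqrt_pos.mpr hS0
    have h1 : Real.sqrt T ≤ Real.sqrt N * Real.sqrt S := by
      rw [← Real.sqrt_mul hn.le]; exact Real.sqrt_le_sqrt hTN'
    calc _ ≤ (d / Real.sqrt S) * (Real.sqrt N * Real.sqrt S / κ) / dynER N q S := by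
          have h2 : δ S * dynED N q S ≤ (d / Real.sqrt S) * (Real.sqrt N * Real.sqrt S / κ) := by
            calc _ ≤ δ S * (Real.sqrt T / κ) := by gcongr
              _ ≤ _ := by gcongr
          gcongr
      _ ≤ (d / Real.sqrt S) * (Real.sqrt N * Real.sqrt S / κ) / S := by gcongr
      _ = _ := by field_simp
  have hfin : dynCost N q (K S) (h S) (δ S) S - optCost N (K S) (h S) S =
      (K S / dynER N q S - K S / T) + (h S / 2) * (T - dynER2 N q S / dynER N q S) +
        δ S * dynED N q S / dynER N q S := by
    unfold dynCost optCost
    rw [hTc, ← hTc]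
    ring
  rw [hfin, add_div, add_div]
  linarith
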